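/- For every natural number n ≥ 1, the claw graph CG(n) and its companion CG'(n) are not isomorphic as simple graphs. -/

import Mathlib

/-- Vertices of the claw graph `CG(n)`: circuit vertices indexed by `ZMod (6n)`,
leaves indexed by `Fin n × Fin 3`, and centres indexed by `Fin n`. -/
inductive ClawVert (n : ℕ) : Type
  | circ : ZMod (6 * n) → ClawVert n
  | leaf : Fin n → Fin 3 → ClawVert n
  | centre : Fin n → ClawVert n
  deriving DecidableEq

/-- Edge relation (before symmetrization) for the claw graph `CG(n)`:
a cycle `C_{6n}` on the circuit vertices, claw edges `c_i ~ ℓ_{i,j}`, and leaf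
`ℓ_{i,j}` joined to the antipodal pair `u_{i+jn}`, `u_{i+jn+3n}`. -/
def cgRel (n : ℕ) : ClawVert n → ClawVert n → Prop
  | .circ m, .circ m' => m' = m + 1
  | .centre i, .leaf i' _ => i = i'
  | .leaf i j, .circ m =>
      m = ((i : ℕ) : ZMod (6 * n)) + ((j : ℕ) : ZMod (6 * n)) * ((n : ℕ) : ZMod (6 * n)) ∨
      m = ((i : ℕ) : ZMod (6 * n)) + ((j : ℕ) : ZMod (6 * n)) * ((n : ℕ) : ZMod (6 * n))
            + ((3 * n : ℕ) : ZMod (6 * n))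
  | _, _ => False

/-- The claw graph `CG(n)`. -/
def CG (n : ℕ) : SimpleGraph (ClawVert n) := SimpleGraph.fromRel (cgRel n)

/-- Edge relation (before symmetrization) for the companion `CG'(n)`: the same
claw and leaf edges, but the circuit `C_{6n}` is replaced by two disjoint copies
of `C_{3n}`: writing a circuit index as `s·3n + a` with `0 ≤ a < 3n`,
`u_{s·3n+a} ~ u_{s'·3n+a'}` iff `s = s'` and `a' ≡ a ± 1 (mod 3n)`. -/
def cgRel' (n : ℕ) : ClawVert n → ClawVert n → Prop
  | .circ m, .circ m' =>
      m.val / (3 * n) = m'.val / (3 * n) ∧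
      m'.val % (3 * n) = (m.val % (3 * n) + 1) % (3 * n)
  | .centre i, .leaf i' _ => i = i'
  | .leaf i j, .circ m =>
      m = ((i : ℕ) : ZMod (6 * n)) + ((j : ℕ) : ZMod (6 * n)) * ((n : ℕ) : ZMod (6 * n)) ∨
      m = ((i : ℕ) : ZMod (6 * n)) + ((j : ℕ) : ZMod (6 * n)) * ((n : ℕ) : ZMod (6 * n))
            + ((3 * n : ℕ) : ZMod (6 * n))
  | _, _ => False

/-- The companion claw graph `CG'(n)`. -/
def CG' (n : ℕ) : SimpleGraph (ClawVert n) := SimpleGraph.fromRel (cgRel' n)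

namespace ClawAux

open ClawVert

/-! Small cases -/

instance decRel (n : ℕ) : DecidableRel (cgRel n) := fun v w => by
  cases v <;> cases w <;> unfold cgRel <;> infer_instance

instance decRel' (n : ℕ) : DecidableRel (cgRel' n) := fun v w => by
  cases v <;> cases w <;> unfold cgRel' <;> infer_instance

instance decAdj (n : ℕ) : DecidableRel (CG n).Adj := fun v w =>
  inferInstanceAs (Decidable (v ≠ w ∧ (cgRel n v w ∨ cgRel n w v)))

instance decAdj' (n : ℕ) : DecidableRel (CG' n).Adj := fun v w =>
  inferInstanceAs (Decidable (v ≠ w ∧ (cgRel' n v w ∨ cgRel' n w v)))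

def allV (n : ℕ) : List (ClawVert n) :=
  (List.range (6 * n)).map (fun m : ℕ => circ (m : ZMod (6 * n))) ++
  (List.finRange n).flatMap (fun i => [centre i, leaf i 0, leaf i 1, leaf i 2])

theorem mem_allV (n : ℕ) (hn : 1 ≤ n) (v : ClawVert n) : v ∈ allV n := by
  have : NeZero (6 * n) := ⟨by omega⟩
  cases v with
  | circ m =>
    apply List.mem_append_left
    exact List.mem_map.2 ⟨m.val, List.mem_range.2 (ZMod.val_lt m), by simp⟩
  | leaf i j =>
    apply List.mem_append_right
    refine List.mem_flatMap.2 ⟨i, List.mem_finRange i, ?_⟩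
    fin_cases j <;> simp
  | centre i =>
    apply List.mem_append_right
    exact List.mem_flatMap.2 ⟨i, List.mem_finRange i, by simp⟩

theorem case_one : IsEmpty (CG 1 ≃g CG' 1) := by
  refine ⟨fun φ => ?_⟩
  have h : ∀ a ∈ allV 1, ∀ b ∈ allV 1, (CG 1).Adj a b → ∀ c ∈ allV 1,
      (CG 1).Adj b c → ¬ (CG 1).Adj a c := by decide +kernel
  have h1 : (CG' 1).Adj (circ 0) (circ 1) := by decide +kernel
  have h2 : (CG' 1).Adj (circ 1) (circ 2) := by decide +kernel
  have h3 : (CG' 1).Adj (circ 0) (circ 2) := by decide +kernel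
  exact h _ (mem_allV 1 le_rfl (φ.symm (circ 0))) _ (mem_allV 1 le_rfl (φ.symm (circ 1)))
    (φ.symm.map_adj_iff.2 h1) _ (mem_allV 1 le_rfl (φ.symm (circ 2)))
    (φ.symm.map_adj_iff.2 h2) (φ.symm.map_adj_iff.2 h3)

def nb (v : ClawVert 2) : List (ClawVert 2) := (allV 2).filter (fun w => decide ((CG 2).Adj v w))
def nb' (v : ClawVert 2) : List (ClawVert 2) := (allV 2).filter (fun w => decide ((CG' 2).Adj v w))

theorem mem_nb (v w) : w ∈ nb v ↔ (CG 2).Adj v w := by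
  simp [nb, mem_allV 2 (by norm_num)]
theorem mem_nb' (v w) : w ∈ nb' v ↔ (CG' 2).Adj v w := by
  simp [nb', mem_allV 2 (by norm_num)]

theorem case_two : IsEmpty (CG 2 ≃g CG' 2) := by
  refine ⟨fun φ => ?_⟩
  have h : ∀ w ∈ allV 2, (w ∈ ((nb (circ 0)).flatMap nb).flatMap nb) ∨
      (w ∈ (((nb (circ 0)).flatMap nb).flatMap nb).flatMap nb) := by decide +kernel
  have h' : ∀ v ∈ allV 2, ∃ w ∈ allV 2, ¬ (w ∈ ((nb' v).flatMap nb').flatMap nb') ∧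
      ¬ (w ∈ (((nb' v).flatMap nb').flatMap nb').flatMap nb') := by decide +kernel
  obtain ⟨w, -, h3, h4⟩ := h' (φ (circ 0)) (mem_allV 2 (by norm_num) _)
  simp only [List.mem_flatMap, mem_nb, mem_nb'] at h h3 h4
  rcases h (φ.symm w) (mem_allV 2 (by norm_num) _) with
    ⟨b, ⟨a, h0, h1⟩, h2⟩ | ⟨c, ⟨b, ⟨a, h0, h1⟩, h2⟩, h5⟩
  · apply h3
    refine ⟨φ b, ⟨φ a, φ.map_adj_iff.2 h0, φ.map_adj_iff.2 h1⟩, ?_⟩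
    have := φ.map_adj_iff.2 h2
    simpa using this
  · apply h4
    refine ⟨φ c, ⟨φ b, ⟨φ a, φ.map_adj_iff.2 h0, φ.map_adj_iff.2 h1⟩, φ.map_adj_iff.2 h2⟩, ?_⟩
    have := φ.map_adj_iff.2 h5
    simpa using this

/-! Large case -/

/-- `v` lies on a (weakly nondegenerate) hexagon. -/
def P {V : Type} (G : SimpleGraph V) (v : V) : Prop :=
  ∃ a x y z b, G.Adj v a ∧ G.Adj a x ∧ G.Adj x y ∧ G.Adj y z ∧ G.Adj z b ∧ G.Adj b v ∧
    a ≠ b ∧ x ≠ v ∧ z ≠ v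

theorem P_map {V W : Type} {G : SimpleGraph V} {H : SimpleGraph W} (φ : G ≃g H) {v : V}
    (h : P G v) : P H (φ v) := by
  obtain ⟨a, x, y, z, b, h1, h2, h3, h4, h5, h6, h7, h8, h9⟩ := h
  exact ⟨φ a, φ x, φ y, φ z, φ b, φ.map_adj_iff.2 h1, φ.map_adj_iff.2 h2, φ.map_adj_iff.2 h3,
    φ.map_adj_iff.2 h4, φ.map_adj_iff.2 h5, φ.map_adj_iff.2 h6, φ.injective.ne h7,
    φ.injective.ne h8, φ.injective.ne h9⟩

section
variable {n : ℕ}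

/-! Adjacency in `CG n` -/

theorem three_ne (hn : 3 ≤ n) : ((3 * n : ℕ) : ZMod (6 * n)) ≠ 0 := by
  rw [Ne, ZMod.natCast_eq_zero_iff]
  intro h
  have := Nat.le_of_dvd (by omega) h
  omega

theorem three_add : ((3 * n : ℕ) : ZMod (6 * n)) + ((3 * n : ℕ) : ZMod (6 * n)) = 0 := by
  rw [← Nat.cast_add, ZMod.natCast_eq_zero_iff]
  exact ⟨1, by ring⟩

theorem cg_succ (hn : 3 ≤ n) (m : ZMod (6 * n)) : (CG n).Adj (circ m) (circ (m + 1)) := by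
  have : Fact (1 < 6 * n) := ⟨by omega⟩
  refine ⟨fun h => ?_, Or.inl rfl⟩
  injection h with h
  have : (1 : ZMod (6 * n)) = 0 := by simpa using h.symm
  exact one_ne_zero this

theorem cg_leaf (hn : 3 ≤ n) (m : ZMod (6 * n)) : ∃ i j, (CG n).Adj (leaf i j) (circ m) ∧
    (CG n).Adj (leaf i j) (circ (m + ((3 * n : ℕ) : ZMod (6 * n)))) := by
  have : NeZero (6 * n) := ⟨by omega⟩
  have hm := ZMod.val_lt m
  set k := m.val % (3 * n) with hk
  have hk3 : k < 3 * n := Nat.mod_lt _ (by omega)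
  have hj : k / n < 3 := (Nat.div_lt_iff_lt_mul (by omega)).2 hk3
  have hkk : k = k % n + k / n * n := by
    have := Nat.mod_add_div k n; rw [mul_comm]; exact this.symm
  have hc : m = (k : ZMod (6 * n)) ∨ m = (k : ZMod (6 * n)) + ((3 * n : ℕ) : ZMod (6 * n)) := by
    by_cases h : m.val < 3 * n
    · left
      rw [hk, Nat.mod_eq_of_lt h]; simp
    · right
      have : m.val = k + 3 * n := by
        rw [hk, Nat.mod_eq_sub_mod (by omega), Nat.mod_eq_of_lt (by omega)]; omega
      rw [← Nat.cast_add, ← this]; simp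
  have hcast : (k : ZMod (6 * n)) = ((k % n : ℕ) : ZMod (6 * n)) + ((k / n : ℕ) : ZMod (6 * n)) *
      ((n : ℕ) : ZMod (6 * n)) := by
    rw [← Nat.cast_mul, ← Nat.cast_add, ← hkk]
  refine ⟨⟨k % n, Nat.mod_lt _ (by omega)⟩, ⟨k / n, hj⟩, ⟨by simp, Or.inl ?_⟩, ⟨by simp, Or.inl ?_⟩⟩
  · simpa only [cgRel, ← hcast] using hc
  · simp only [cgRel, ← hcast]
    rcases hc with hc | hc
    · right; rw [← hc]
    · left; rw [hc, add_assoc, three_add, add_zero]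

theorem cg_P (hn : 3 ≤ n) (v : ClawVert n) (hv : ∀ i, v ≠ centre i) : P (CG n) v := by
  have h3 := three_ne hn
  cases v with
  | centre i => exact absurd rfl (hv i)
  | circ m =>
    obtain ⟨i, j, h1, h2⟩ := cg_leaf hn m
    obtain ⟨i', j', h1', h2'⟩ := cg_leaf hn (m + 1)
    refine ⟨leaf i j, circ (m + ((3 * n : ℕ) : ZMod (6 * n))),
      circ (m + 1 + ((3 * n : ℕ) : ZMod (6 * n))), leaf i' j', circ (m + 1),
      h1.symm, h2, ?_, h2'.symm, h1', (cg_succ hn m).symm, by simp, ?_, by simp⟩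
    · rw [add_right_comm]; exact cg_succ hn _
    · intro h
      injection h with h
      exact h3 (by simpa using h)
  | leaf i j =>
    set m : ZMod (6 * n) := ((i : ℕ) : ZMod (6 * n)) + ((j : ℕ) : ZMod (6 * n)) *
      ((n : ℕ) : ZMod (6 * n)) with hm
    obtain ⟨i', j', h1', h2'⟩ := cg_leaf hn (m + 1)
    refine ⟨circ m, circ (m + 1), leaf i' j', circ (m + 1 + ((3 * n : ℕ) : ZMod (6 * n))),
      circ (m + ((3 * n : ℕ) : ZMod (6 * n))),
      ⟨by simp, Or.inl (Or.inl rfl)⟩, cg_succ hn m, h1'.symm, h2', ?_,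
      ⟨by simp, Or.inr (Or.inr rfl)⟩, ?_, by simp, by simp⟩
    · rw [add_right_comm]; exact (cg_succ hn _).symm
    · intro h
      injection h with h
      exact h3 (by simpa using h.symm)

/-! Adjacency in `CG' n` -/

/-- position modulo `3n` -/
def pos (n : ℕ) (m : ZMod (6 * n)) : ZMod (3 * n) :=
  ZMod.castHom (⟨2, by ring⟩ : 3 * n ∣ 6 * n) (ZMod (3 * n)) m

theorem pos_leaf {i : Fin n} {j : Fin 3} {m : ZMod (6 * n)}
    (h : cgRel' n (leaf i j) (circ m)) :
    pos n m = (((i : ℕ) + (j : ℕ) * n : ℕ) : ZMod (3 * n)) := by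
  have h0 : ((3 * n : ℕ) : ZMod (3 * n)) = 0 := ZMod.natCast_self _
  rcases h with h | h
  · simp only [pos, h, map_add, map_mul, map_natCast, Nat.cast_add, Nat.cast_mul]
  · rw [pos, h, map_add, map_natCast _ (3 * n), h0, add_zero]
    simp only [map_add, map_mul, map_natCast, Nat.cast_add, Nat.cast_mul]

theorem pos_circ (hn : 3 ≤ n) {m m' : ZMod (6 * n)} (h : cgRel' n (circ m) (circ m')) :
    pos n m' = pos n m + 1 := by
  have : NeZero (6 * n) := ⟨by omega⟩
  have key : ∀ x : ZMod (6 * n), pos n x = ((x.val % (3 * n) : ℕ) : ZMod (3 * n)) := by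
    intro x
    rw [ZMod.natCast_mod]
    conv_lhs => rw [← ZMod.natCast_zmod_val x]
    simp only [pos, map_natCast]
  rw [key, key, h.2, ZMod.natCast_mod]
  push_cast
  rfl

theorem adj_centre {i : Fin n} {v : ClawVert n} (h : (CG' n).Adj (centre i) v) :
    ∃ j, v = leaf i j := by
  obtain ⟨-, h | h⟩ := h <;> cases v <;> simp_all [cgRel']

theorem adj_centre_cg {i : Fin n} {v : ClawVert n} (h : (CG n).Adj (centre i) v) :
    ∃ j, v = leaf i j := by
  obtain ⟨-, h | h⟩ := h <;> cases v <;> simp_all [cgRel]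

theorem adj_leaf {i : Fin n} {j : Fin 3} {v : ClawVert n} (h : (CG' n).Adj (leaf i j) v) :
    v = centre i ∨ ∃ m, v = circ m ∧ pos n m = (((i : ℕ) + (j : ℕ) * n : ℕ) : ZMod (3 * n)) := by
  obtain ⟨-, h | h⟩ := h
  · cases v with
    | circ m => exact Or.inr ⟨m, rfl, pos_leaf h⟩
    | leaf i j => exact h.elim
    | centre i => exact h.elim
  · cases v with
    | circ m => exact h.elim
    | leaf i j => exact h.elim
    | centre i' => left; rw [show i' = i from h]

theorem adj_circ (hn : 3 ≤ n) {m : ZMod (6 * n)} {v : ClawVert n} (h : (CG' n).Adj (circ m) v) :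
    (∃ i j, v = leaf i j) ∨
      ∃ m', v = circ m' ∧ (pos n m' = pos n m + 1 ∨ pos n m = pos n m' + 1) := by
  obtain ⟨-, h | h⟩ := h
  · cases v with
    | circ m' => exact Or.inr ⟨m', rfl, Or.inl (pos_circ hn h)⟩
    | leaf i j => exact h.elim
    | centre i => exact h.elim
  · cases v with
    | circ m' => exact Or.inr ⟨m', rfl, Or.inr (pos_circ hn h)⟩
    | leaf i j => exact Or.inl ⟨i, j, rfl⟩
    | centre i => exact h.elim

theorem arith (hn : 3 ≤ n) (i : Fin n) (j j' : Fin 3) (e : ℤ) (he : e = 0 ∨ e = 2 ∨ e = -2)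
    (h : (((i : ℕ) + (j : ℕ) * n : ℕ) : ZMod (3 * n)) =
      (((i : ℕ) + (j' : ℕ) * n : ℕ) : ZMod (3 * n)) + (e : ZMod (3 * n))) : j = j' := by
  have h2 : (((j : ℤ) * n - (j' : ℤ) * n - e : ℤ) : ZMod (3 * n)) = 0 := by
    push_cast at h ⊢
    linear_combination h
  rw [ZMod.intCast_zmod_eq_zero_iff_dvd] at h2
  have h3 : (j : ℤ) * n - (j' : ℤ) * n - e = 0 := by
    apply Int.eq_zero_of_abs_lt_dvd h2
    rw [abs_lt]
    push_cast
    fin_cases j <;> fin_cases j' <;> simp <;> omega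
  fin_cases j <;> fin_cases j' <;> simp at h3 ⊢ <;> omega

theorem not_P (hn : 3 ≤ n) (i : Fin n) : ¬ P (CG' n) (centre i) := by
  rintro ⟨a, x, y, z, b, h1, h2, h3, h4, h5, h6, h7, h8, h9⟩
  obtain ⟨j, rfl⟩ := adj_centre h1
  obtain ⟨j', rfl⟩ := adj_centre h6.symm
  rcases adj_leaf h2 with rfl | ⟨m, rfl, hm⟩
  · exact h8 rfl
  rcases adj_leaf h5.symm with rfl | ⟨m', rfl, hm'⟩
  · exact h9 rfl
  apply h7
  suffices j = j' by rw [this]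
  rcases adj_circ hn h3 with ⟨i0, j0, rfl⟩ | ⟨k, rfl, hk⟩
  · rcases adj_leaf h3.symm with h | ⟨_, h, hp⟩
    · cases h
    injection h with h; subst h
    rcases adj_leaf h4 with h | ⟨_, h, hp'⟩
    · cases h
    injection h with h; subst h
    apply arith hn i j j' 0 (by simp)
    rw [← hm, ← hm', hp, hp']; simp
  · rcases adj_circ hn h4.symm with ⟨_, _, h⟩ | ⟨_, h, hk'⟩
    · cases h
    injection h with h; subst h
    rw [hm] at hk
    rw [hm'] at hk'
    rcases hk with hk | hk <;> rcases hk' with hk' | hk'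
    · exact arith hn i j j' 0 (by simp) (by push_cast at *; linear_combination hk' - hk)
    · exact arith hn i j j' (-2) (by simp) (by push_cast at *; linear_combination - hk' - hk)
    · exact arith hn i j j' 2 (by simp) (by push_cast at *; linear_combination hk' + hk)
    · exact arith hn i j j' 0 (by simp) (by push_cast at *; linear_combination hk - hk')

theorem finiteV (hn : 3 ≤ n) : Finite (ClawVert n) :=
  Set.finite_univ_iff.1 ((List.finite_toSet (allV n)).subset
    (fun v _ => mem_allV n (by omega) v))

theorem case_large (hn : 3 ≤ n) : IsEmpty (CG n ≃g CG' n) := by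
  refine ⟨fun φ => ?_⟩
  have := finiteV hn
  have : NeZero (6 * n) := ⟨by omega⟩
  have A : ∀ v : ClawVert n, (∀ i, v ≠ centre i) → ∀ i, φ v ≠ centre i := by
    intro v hv i h
    have := P_map φ (cg_P hn v hv)
    rw [h] at this
    exact not_P hn i this
  have B : ∀ i, ∃ i', φ (centre i') = centre i := by
    intro i
    by_contra hcon
    have : ∀ i, ∃ k, φ.symm (centre i) = centre k := by
      intro i
      by_contra h
      push Not at h
      exact A _ h i (by simp)
    obtain ⟨k, hk⟩ := this i
    exact hcon ⟨k, by rw [← hk]; simp⟩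
  have B' : ∀ m, ∃ m', φ (circ m) = circ m' := by
    intro m
    cases h : φ (circ m) with
    | circ m' => exact ⟨m', rfl⟩
    | centre i => exact absurd h (A _ (by simp) i)
    | leaf i j =>
      obtain ⟨i', hi'⟩ := B i
      have h1 : (CG' n).Adj (centre i) (leaf i j) := ⟨by simp, Or.inl rfl⟩
      rw [← h, ← hi', φ.map_adj_iff] at h1
      obtain ⟨_, h2⟩ := adj_centre_cg h1
      cases h2
  choose f hf using B'
  have hinj : Function.Injective f := by
    intro a b hab
    have : φ (circ a) = φ (circ b) := by rw [hf, hf, hab]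
    have := φ.injective this
    injection this
  have hsurj := Finite.surjective_of_injective hinj
  have hstep : ∀ m, (f (m + 1)).val / (3 * n) = (f m).val / (3 * n) := by
    intro m
    have h := φ.map_adj_iff.2 (cg_succ hn m)
    rw [hf, hf] at h
    obtain ⟨-, h | h⟩ := h
    · exact h.1.symm
    · exact h.1
  have hconst : ∀ k : ℕ, (f (k : ZMod (6 * n))).val / (3 * n) = (f 0).val / (3 * n) := by
    intro k
    induction k with
    | zero => simp
    | succ k ih => rw [Nat.cast_succ, hstep, ih]
  have hall : ∀ x : ZMod (6 * n), x.val / (3 * n) = (f 0).val / (3 * n) := by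
    intro x
    obtain ⟨y, rfl⟩ := hsurj x
    have := hconst y.val
    simpa using this
  have h0 := hall 0
  have h1 := hall ((3 * n : ℕ) : ZMod (6 * n))
  rw [← h0, ZMod.val_natCast, Nat.mod_eq_of_lt (by omega), Nat.div_self (by omega)] at h1
  simp at h1

end

end ClawAux

/-- For every `n ≥ 1`, the claw graph `CG(n)` and its companion `CG'(n)` are
not isomorphic as simple graphs. -/
theorem claw_not_isomorphic (n : ℕ) (hn : 1 ≤ n) :
    IsEmpty (CG n ≃g CG' n) := by
  rcases Nat.lt_or_ge n 3 with h | h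
  · interval_cases n
    · exact ClawAux.case_one
    · exact ClawAux.case_two
  · exact ClawAux.case_large h
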